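/- arXiv:2311.05753 — 2 statements merged into one kernel-verified Lean document; each statement's English description precedes it below -/
import Mathlib

section
/- The three-term chain complex of R-modules A ⊕ B →(d) A ⊕ B →(ε) K, placed in homological degrees 1, 0, −1, has homology concentrated in degree 0, and its degree-0 homology is isomorphic as an R-module to R ⧸ (x₁ − x₂, y₁ − y₂); that is, this complex is quasi-isomorphic to the diagonal module R/(x₁−x₂, y₁−y₂) placed in degree 0. -/
/-!
Let `k` be a field and `R = k[x₁,y₁,x₂,y₂]/(x₁y₁, x₂y₂)` the coordinate ring of the
self-product of the nodal conic, realized as `MvPolynomial (Fin 4) k` modulo the ideal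
generated by `X 0 * X 1` and `X 2 * X 3`, with `x₁ = X 0`, `y₁ = X 1`, `x₂ = X 2`,
`y₂ = X 3`.  We define the `R`-modules `A = R/(y₁,y₂)`, `B = R/(x₁,x₂)`,
`K = R/(x₁,y₁,x₂,y₂)`, the map `d : A ⊕ B → A ⊕ B`, `(a,b) ↦ ((x₁−x₂)a, (y₁−y₂)b)`,
and the map `ε : A ⊕ B → K` given by the canonical quotient maps on each factor.
-/

open MvPolynomial

set_option synthInstance.maxHeartbeats 1000000
set_option maxHeartbeats 1000000

noncomputable section

/-- The coordinate ring `R = k[x₁,y₁,x₂,y₂]/(x₁y₁, x₂y₂)` of the self-product of the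
nodal conic. -/
abbrev nodalR (k : Type) [Field k] : Type :=
  MvPolynomial (Fin 4) k ⧸
    (Ideal.span {X 0 * X 1, X 2 * X 3} : Ideal (MvPolynomial (Fin 4) k))

variable (k : Type) [Field k]

/-- `x₁` -/ def nx₁ : nodalR k := Ideal.Quotient.mk _ (X 0)
/-- `y₁` -/ def ny₁ : nodalR k := Ideal.Quotient.mk _ (X 1)
/-- `x₂` -/ def nx₂ : nodalR k := Ideal.Quotient.mk _ (X 2)
/-- `y₂` -/ def ny₂ : nodalR k := Ideal.Quotient.mk _ (X 3)

/-- The ideal `(y₁, y₂)`. -/ def JA : Ideal (nodalR k) := Ideal.span {ny₁ k, ny₂ k}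
/-- The ideal `(x₁, x₂)`. -/ def JB : Ideal (nodalR k) := Ideal.span {nx₁ k, nx₂ k}
/-- The ideal `(x₁, y₁, x₂, y₂)`. -/
def JK : Ideal (nodalR k) := Ideal.span {nx₁ k, ny₁ k, nx₂ k, ny₂ k}

/-- `A = R/(y₁,y₂)`. -/ abbrev nodalA := nodalR k ⧸ JA k
/-- `B = R/(x₁,x₂)`. -/ abbrev nodalB := nodalR k ⧸ JB k
/-- `K = R/(x₁,y₁,x₂,y₂)`. -/ abbrev nodalK := nodalR k ⧸ JK k

lemma JA_le_JK : JA k ≤ JK k := by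
  rw [JA, Ideal.span_le]
  rintro a ha
  simp only [Set.mem_insert_iff, Set.mem_singleton_iff] at ha
  rcases ha with rfl | rfl <;> exact Ideal.subset_span (by simp [JK])

lemma JB_le_JK : JB k ≤ JK k := by
  rw [JB, Ideal.span_le]
  rintro a ha
  simp only [Set.mem_insert_iff, Set.mem_singleton_iff] at ha
  rcases ha with rfl | rfl <;> exact Ideal.subset_span (by simp [JK])

/-- The canonical quotient map `A → K`. -/
def qA : nodalA k →ₗ[nodalR k] nodalK k :=
  Submodule.mapQ (JA k) (JK k) LinearMap.id (by simpa using JA_le_JK k)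

/-- The canonical quotient map `B → K`. -/
def qB : nodalB k →ₗ[nodalR k] nodalK k :=
  Submodule.mapQ (JB k) (JK k) LinearMap.id (by simpa using JB_le_JK k)

/-- `d : A ⊕ B → A ⊕ B`, `(a, b) ↦ ((x₁ − x₂)·a, (y₁ − y₂)·b)`. -/
def nodal_d : nodalA k × nodalB k →ₗ[nodalR k] nodalA k × nodalB k :=
  (LinearMap.lsmul (nodalR k) (nodalA k) (nx₁ k - nx₂ k)).prodMap
    (LinearMap.lsmul (nodalR k) (nodalB k) (ny₁ k - ny₂ k))

/-- `ε : A ⊕ B → K`, `(a, b) ↦ ā + b̄`. -/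
def nodal_ε : nodalA k × nodalB k →ₗ[nodalR k] nodalK k :=
  LinearMap.coprod (qA k) (qB k)

/-!
For ideals `I`, `J` of a commutative ring `R`, the Mayer–Vietoris sequence identifies the kernel of
`R/I ⊕ R/J → R/(I + J)` with the image of the antidiagonal map `r ↦ (r̄, -r̄)`. Hence multiplying
`R/I` by `f` and `R/J` by `g` leaves the middle homology `R/((I + (f)) ∩ (J + (g)))`. For the nodal
conic these two ideals cut out the two branches of the diagonal, and `(Δ + (y)) ∩ (Δ + (x)) = Δ`
because `x * y ∈ Δ` and `y` is a nonzerodivisor modulo `Δ + (x)`, where `Δ` is the ideal of the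
diagonal. The required regularity holds because the quotients by the ideals involved are polynomial
rings, in which the elements in question become monic polynomials.
-/

section MayerVietoris

variable {R M N : Type*} [CommRing R] [AddCommGroup M] [Module R M] [AddCommGroup N] [Module R N]
variable {p q r : Submodule R M}

/-- The sum map `M/p ⊕ M/q → M/r` of the Mayer–Vietoris sequence of two submodules `p`, `q`. The
target is a quotient by any `r` containing both; the sequence is exact when `r = p + q`. -/
def mayerVietorisSum (hp : p ≤ r) (hq : q ≤ r) : ((M ⧸ p) × (M ⧸ q)) →ₗ[R] M ⧸ r :=
  (Submodule.factor hp).coprod (Submodule.factor hq)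

variable (p q) in
/-- The antidiagonal map `M → M/p ⊕ M/q`, `m ↦ (m̄, -m̄)`, of the Mayer–Vietoris sequence. -/
def mayerVietorisAntidiagonal : M →ₗ[R] (M ⧸ p) × (M ⧸ q) :=
  p.mkQ.prod (-q.mkQ)

lemma mayerVietorisSum_surjective (hp : p ≤ r) (hq : q ≤ r) :
    Function.Surjective (mayerVietorisSum hp hq) := fun z =>
  let ⟨a, ha⟩ := Submodule.factor_surjective hp z
  ⟨(a, 0), by simpa [mayerVietorisSum] using ha⟩

lemma range_mayerVietorisAntidiagonal (hp : p ≤ r) (hq : q ≤ r) (hr : r ≤ p ⊔ q) :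
    LinearMap.range (mayerVietorisAntidiagonal p q) =
      LinearMap.ker (mayerVietorisSum hp hq) := by
  apply le_antisymm
  · rintro _ ⟨m, rfl⟩
    simp [mayerVietorisAntidiagonal, mayerVietorisSum]
  · rintro ⟨a, b⟩ hab
    obtain ⟨m, rfl⟩ := p.mkQ_surjective a
    obtain ⟨n, rfl⟩ := q.mkQ_surjective b
    have hmn : m + n ∈ r := (Submodule.Quotient.mk_eq_zero r).mp hab
    obtain ⟨s, hs, t, ht, hst⟩ := Submodule.mem_sup.mp (hr hmn)
    refine ⟨m - s, Prod.ext ((Submodule.Quotient.eq p).mpr ?_)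
      ((Submodule.Quotient.eq q).mpr ?_)⟩
    · simpa using hs
    · have : -(m - s) - n = -t := by rw [eq_sub_of_add_eq hst]; abel
      exact this ▸ neg_mem ht

lemma comap_mayerVietorisAntidiagonal_prod (P : Submodule R (M ⧸ p)) (Q : Submodule R (M ⧸ q)) :
    (P.prod Q).comap (mayerVietorisAntidiagonal p q) = P.comap p.mkQ ⊓ Q.comap q.mkQ := by
  ext m
  simp [mayerVietorisAntidiagonal]

/-- If `u` maps `M` onto `W`, then the quotient of `W` by its part in `T` is `M` modulo the preimage
of `T`. It computes the homology of a complex at a spot whose cycles `W` are parametrized by `u`. -/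
def quotientComapSubtypeEquiv {u : M →ₗ[R] N} {W : Submodule R N} (hu : LinearMap.range u = W)
    (T : Submodule R N) : (W ⧸ T.comap W.subtype) ≃ₗ[R] M ⧸ T.comap u :=
  have hmem (m : M) : u m ∈ W := hu ▸ LinearMap.mem_range_self u m
  let v : M →ₗ[R] W ⧸ T.comap W.subtype := (T.comap W.subtype).mkQ ∘ₗ u.codRestrict W hmem
  have hker : T.comap u = LinearMap.ker v := by
    rw [LinearMap.ker_comp, Submodule.ker_mkQ, ← Submodule.comap_comp,
      LinearMap.subtype_comp_codRestrict]
  have hv : Function.Surjective v :=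
    (Submodule.mkQ_surjective _).comp fun ⟨_, hw⟩ =>
      let ⟨m, hm⟩ := hu.symm ▸ hw
      ⟨m, Subtype.ext hm⟩
  ((Submodule.quotEquivOfEq _ _ hker).trans (v.quotKerEquivOfSurjective hv)).symm

/-- The endomorphism of `M ⊕ N` that multiplies the first summand by `f` and the second by `g`. -/
def prodScale (M N : Type*) [AddCommGroup M] [Module R M] [AddCommGroup N] [Module R N] (f g : R) :
    M × N →ₗ[R] M × N :=
  (LinearMap.lsmul R M f).prodMap (LinearMap.lsmul R N g)

lemma prodScale_injective {f g : R} (hf : IsSMulRegular M f) (hg : IsSMulRegular N g) :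
    Function.Injective (prodScale M N f g) :=
  Function.Injective.prodMap hf hg

lemma mayerVietorisSum_comp_prodScale (hp : p ≤ r) (hq : q ≤ r) {f g : R}
    (hf : ∀ m : M, f • m ∈ r) (hg : ∀ m : M, g • m ∈ r) :
    mayerVietorisSum hp hq ∘ₗ prodScale (M ⧸ p) (M ⧸ q) f g = 0 := by
  refine LinearMap.ext fun ⟨a, b⟩ => ?_
  obtain ⟨m, rfl⟩ := p.mkQ_surjective a
  obtain ⟨n, rfl⟩ := q.mkQ_surjective b
  exact (Submodule.Quotient.mk_eq_zero r).mpr (r.add_mem (hf m) (hg n))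

lemma comap_mkQ_range_lsmul (p : Submodule R M) (f : R) :
    (LinearMap.range (LinearMap.lsmul R (M ⧸ p) f)).comap p.mkQ =
      p ⊔ LinearMap.range (LinearMap.lsmul R M f) := by
  have hcomm : LinearMap.lsmul R (M ⧸ p) f ∘ₗ p.mkQ = p.mkQ ∘ₗ LinearMap.lsmul R M f := rfl
  rw [← LinearMap.range_comp_of_range_eq_top _ p.range_mkQ, hcomm, LinearMap.range_comp,
    Submodule.comap_map_mkQ]

/-- The middle homology of `M/p ⊕ M/q → M/p ⊕ M/q → M/r`, where `r = p + q` and the first map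
multiplies the summands by `f` and `g`. Written as cycles modulo boundaries lying in the cycles, it
makes sense even if the composite is nonzero. -/
def mayerVietorisHomologyEquiv (hp : p ≤ r) (hq : q ≤ r) (hr : r ≤ p ⊔ q) (f g : R) :
    (LinearMap.ker (mayerVietorisSum hp hq) ⧸
        (LinearMap.range (prodScale (M ⧸ p) (M ⧸ q) f g)).comap
          (LinearMap.ker (mayerVietorisSum hp hq)).subtype) ≃ₗ[R]
      M ⧸ (p ⊔ LinearMap.range (LinearMap.lsmul R M f)) ⊓
        (q ⊔ LinearMap.range (LinearMap.lsmul R M g)) :=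
  (quotientComapSubtypeEquiv (range_mayerVietorisAntidiagonal hp hq hr) _).trans <|
    Submodule.quotEquivOfEq _ _ <| by
      rw [prodScale, LinearMap.range_prodMap, comap_mayerVietorisAntidiagonal_prod,
        comap_mkQ_range_lsmul, comap_mkQ_range_lsmul]

end MayerVietoris

section Ideal

variable {R : Type*} [CommRing R] {I : Ideal R}

lemma range_lsmul_self (f : R) : LinearMap.range (LinearMap.lsmul R R f) = Ideal.span {f} := by
  ext a
  simp [Ideal.mem_span_singleton', mul_comm]

lemma sup_span_inf_sup_span_eq {x y : R} (hxy : x * y ∈ I)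
    (hy : IsSMulRegular (R ⧸ (I ⊔ Ideal.span {x})) y) :
    (I ⊔ Ideal.span {y}) ⊓ (I ⊔ Ideal.span {x}) = I := by
  refine le_antisymm ?_ (le_inf le_sup_left le_sup_left)
  rintro _ ⟨hr, hrx⟩
  obtain ⟨i, hi, _, hay, rfl⟩ := Submodule.mem_sup.mp hr
  obtain ⟨a, rfl⟩ := Ideal.mem_span_singleton'.mp hay
  have hyax : y • a ∈ I ⊔ Ideal.span {x} := by
    simpa [mul_comm] using (Submodule.add_mem_iff_right _ (Ideal.mem_sup_left hi)).mp hrx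
  have hax : a ∈ I ⊔ Ideal.span {x} := mem_of_isSMulRegular_quotient_of_smul_mem hy hyax
  obtain ⟨j, hj, _, hbx, rfl⟩ := Submodule.mem_sup.mp hax
  obtain ⟨b, rfl⟩ := Ideal.mem_span_singleton'.mp hbx
  have : i + (j + b * x) * y = i + y * j + b * (x * y) := by ring
  rw [this]
  exact I.add_mem (I.add_mem hi (I.mul_mem_left y hj)) (I.mul_mem_left b hxy)

lemma isSMulRegular_quotient_of_leftInverse {P : Type*} [CommRing P] {σ : R →+* P}
    {τ : P →+* R ⧸ I} {f : R} (hσ : I ≤ RingHom.ker σ) (hτ : τ.comp σ = Ideal.Quotient.mk I)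
    (hf : IsSMulRegular P (σ f)) : IsSMulRegular (R ⧸ I) f := by
  refine (isSMulRegular_quotient_iff_mem_of_smul_mem I f).mpr fun a ha => ?_
  have hσa : σ a = 0 := hf.right_eq_zero_of_smul (by simpa using hσ ha)
  have hτa : Ideal.Quotient.mk I a = 0 := by rw [← hτ, RingHom.comp_apply, hσa, map_zero]
  exact Ideal.Quotient.eq_zero_iff_mem.mp hτa

end Ideal

/-- The coordinate ring `S[x₁,y₁,x₂,y₂]/(x₁y₁, x₂y₂)` of the self-product of the nodal conic over a
commutative ring `S`, with variables in the order `x₁, y₁, x₂, y₂`. -/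
abbrev NodalSquare (S : Type*) [CommRing S] : Type _ :=
  MvPolynomial (Fin 4) S ⧸
    (Ideal.span {X 0 * X 1, X 2 * X 3} : Ideal (MvPolynomial (Fin 4) S))

namespace NodalSquare

variable (S : Type*) [CommRing S]

/-- The coordinate functions of the self-product, numbered as `x₁, y₁, x₂, y₂`. -/
def coord (i : Fin 4) : NodalSquare S := Ideal.Quotient.mk _ (X i)

/-- The coordinate `x` on the first factor. -/
abbrev x₁ : NodalSquare S := coord S 0

/-- The coordinate `y` on the first factor. -/
abbrev y₁ : NodalSquare S := coord S 1

/-- The coordinate `x` on the second factor. -/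
abbrev x₂ : NodalSquare S := coord S 2

/-- The coordinate `y` on the second factor. -/
abbrev y₂ : NodalSquare S := coord S 3

/-- The ideal `(x₁, x₂)` of the self-product of the branch `x = 0`. -/
def xIdeal : Ideal (NodalSquare S) := Ideal.span {x₁ S, x₂ S}

/-- The ideal `(y₁, y₂)` of the self-product of the branch `y = 0`. -/
def yIdeal : Ideal (NodalSquare S) := Ideal.span {y₁ S, y₂ S}

/-- The ideal `(x₁, y₁, x₂, y₂)` of the singular point of both factors. -/
def originIdeal : Ideal (NodalSquare S) := Ideal.span {x₁ S, y₁ S, x₂ S, y₂ S}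

/-- The ideal `(x₁ - x₂, y₁ - y₂)` of the diagonal. -/
def diagonalIdeal : Ideal (NodalSquare S) := Ideal.span {x₁ S - x₂ S, y₁ S - y₂ S}

lemma xIdeal_le_originIdeal : xIdeal S ≤ originIdeal S :=
  Ideal.span_mono (by simp [Set.insert_subset_iff])

lemma yIdeal_le_originIdeal : yIdeal S ≤ originIdeal S :=
  Ideal.span_mono (by simp [Set.insert_subset_iff])

lemma originIdeal_le_sup : originIdeal S ≤ yIdeal S ⊔ xIdeal S := by
  rw [originIdeal, yIdeal, xIdeal, ← Ideal.span_union]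
  exact Ideal.span_mono (by simp [Set.insert_subset_iff])

lemma x₁_mul_y₁ : x₁ S * y₁ S = 0 :=
  Ideal.Quotient.eq_zero_iff_mem.mpr (Ideal.subset_span (by simp))

lemma x₁_sub_x₂_mem_originIdeal : x₁ S - x₂ S ∈ originIdeal S :=
  sub_mem (Ideal.subset_span (by simp)) (Ideal.subset_span (by simp))

lemma y₁_sub_y₂_mem_originIdeal : y₁ S - y₂ S ∈ originIdeal S :=
  sub_mem (Ideal.subset_span (by simp)) (Ideal.subset_span (by simp))

lemma yIdeal_sup_span : yIdeal S ⊔ Ideal.span {x₁ S - x₂ S} =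
    diagonalIdeal S ⊔ Ideal.span {y₁ S} := by
  rw [yIdeal, ← Ideal.span_pair_sub_right' (x := y₁ S), diagonalIdeal, Ideal.span_insert (y₁ S),
    Ideal.span_insert (x₁ S - x₂ S)]
  ac_rfl

lemma xIdeal_sup_span : xIdeal S ⊔ Ideal.span {y₁ S - y₂ S} =
    diagonalIdeal S ⊔ Ideal.span {x₁ S} := by
  rw [xIdeal, ← Ideal.span_pair_sub_right' (x := x₁ S), diagonalIdeal, Ideal.span_insert (x₁ S),
    Ideal.span_insert (x₁ S - x₂ S)]
  ac_rfl

variable {S}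
variable {P : Type*} [CommRing P] [Algebra S P]

/-- The `P`-valued point of the self-product with coordinates `v`. -/
def eval (v : Fin 4 → P) (h₁ : v 0 * v 1 = 0) (h₂ : v 2 * v 3 = 0) : NodalSquare S →ₐ[S] P :=
  Ideal.Quotient.liftₐ _ (aeval v) fun _ ha =>
    (Ideal.span_le (I := RingHom.ker (aeval v))).mpr
      (by simp [Set.insert_subset_iff, h₁, h₂]) ha

@[simp]
lemma eval_coord (v : Fin 4 → P) (h₁ : v 0 * v 1 = 0) (h₂ : v 2 * v 3 = 0) (i : Fin 4) :
    eval v h₁ h₂ (coord S i) = v i :=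
  aeval_X v i

lemma isSMulRegular_quotient_of_eval {I : Ideal (NodalSquare S)} {f : NodalSquare S}
    (v : Fin 4 → P) (h₁ : v 0 * v 1 = 0) (h₂ : v 2 * v 3 = 0) (τ : P →ₐ[S] NodalSquare S ⧸ I)
    (hI : I ≤ RingHom.ker (eval v h₁ h₂))
    (hτ : ∀ i, Ideal.Quotient.mk I (coord S i) = τ (v i))
    (hf : IsSMulRegular P (eval v h₁ h₂ f)) : IsSMulRegular (NodalSquare S ⧸ I) f := by
  have hcomp : τ.comp (eval v h₁ h₂) = Ideal.Quotient.mkₐ S I :=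
    Ideal.Quotient.algHom_ext _ <| MvPolynomial.algHom_ext fun i => by
      simpa [coord] using! (congrArg τ (eval_coord v h₁ h₂ i)).trans (hτ i).symm
  exact isSMulRegular_quotient_of_leftInverse (σ := (eval v h₁ h₂).toRingHom)
    (τ := τ.toRingHom) hI (congrArg AlgHom.toRingHom hcomp) hf

variable (S)

open Polynomial in
lemma isSMulRegular_quotient_yIdeal : IsSMulRegular (NodalSquare S ⧸ yIdeal S) (x₁ S - x₂ S) := by
  have hy₁ : y₁ S ∈ yIdeal S := Ideal.subset_span (by simp)
  have hy₂ : y₂ S ∈ yIdeal S := Ideal.subset_span (by simp)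
  refine isSMulRegular_quotient_of_eval (P := S[X][X]) ![.X, 0, .C .X, 0] (by simp) (by simp)
    (aevalAeval (Ideal.Quotient.mk _ (x₂ S)) (Ideal.Quotient.mk _ (x₁ S))) ?_ ?_ ?_
  · simp [yIdeal, Ideal.span_le, Set.insert_subset_iff]
  · simp [Fin.forall_fin_succ, Ideal.Quotient.eq_zero_iff_mem, hy₁, hy₂]
  · simpa using (monic_X_sub_C (X : S[X])).isRegular.left.isSMulRegular

open Polynomial in
lemma isSMulRegular_quotient_xIdeal : IsSMulRegular (NodalSquare S ⧸ xIdeal S) (y₁ S - y₂ S) := by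
  have hx₁ : x₁ S ∈ xIdeal S := Ideal.subset_span (by simp)
  have hx₂ : x₂ S ∈ xIdeal S := Ideal.subset_span (by simp)
  refine isSMulRegular_quotient_of_eval (P := S[X][X]) ![0, .X, 0, .C .X] (by simp) (by simp)
    (aevalAeval (Ideal.Quotient.mk _ (y₂ S)) (Ideal.Quotient.mk _ (y₁ S))) ?_ ?_ ?_
  · simp [xIdeal, Ideal.span_le, Set.insert_subset_iff]
  · simp [Fin.forall_fin_succ, Ideal.Quotient.eq_zero_iff_mem, hx₁, hx₂]
  · simpa using (monic_X_sub_C (X : S[X])).isRegular.left.isSMulRegular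

open Polynomial in
lemma isSMulRegular_quotient_diagonalIdeal_sup :
    IsSMulRegular (NodalSquare S ⧸ (diagonalIdeal S ⊔ Ideal.span {x₁ S})) (y₁ S) := by
  rw [← xIdeal_sup_span]
  have hx₁ : x₁ S ∈ xIdeal S ⊔ Ideal.span {y₁ S - y₂ S} :=
    Ideal.mem_sup_left (Ideal.subset_span (by simp))
  have hx₂ : x₂ S ∈ xIdeal S ⊔ Ideal.span {y₁ S - y₂ S} :=
    Ideal.mem_sup_left (Ideal.subset_span (by simp))
  have hy : Ideal.Quotient.mk (xIdeal S ⊔ Ideal.span {y₁ S - y₂ S}) (y₂ S) =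
      Ideal.Quotient.mk _ (y₁ S) :=
    (Ideal.Quotient.eq.mpr (Ideal.mem_sup_right (Ideal.mem_span_singleton_self _))).symm
  refine isSMulRegular_quotient_of_eval (P := S[X]) ![0, X, 0, X] (by simp) (by simp)
    (aeval (Ideal.Quotient.mk _ (y₁ S))) ?_ ?_ ?_
  · simp [xIdeal, Ideal.span_le, Set.insert_subset_iff]
  · simp [Fin.forall_fin_succ, Ideal.Quotient.eq_zero_iff_mem, hx₁, hx₂, hy]
  · simpa using Polynomial.isRegular_X.left.isSMulRegular

lemma yIdeal_sup_inf_xIdeal_sup :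
    (yIdeal S ⊔ Ideal.span {x₁ S - x₂ S}) ⊓ (xIdeal S ⊔ Ideal.span {y₁ S - y₂ S}) =
      diagonalIdeal S := by
  rw [yIdeal_sup_span, xIdeal_sup_span]
  exact sup_span_inf_sup_span_eq (by simp [x₁_mul_y₁])
    (isSMulRegular_quotient_diagonalIdeal_sup S)

/-- The map `(a, b) ↦ ((x₁ - x₂) * a, (y₁ - y₂) * b)` on `R/(y₁, y₂) ⊕ R/(x₁, x₂)`, where `R` is
`NodalSquare S`. -/
abbrev d : (NodalSquare S ⧸ yIdeal S) × (NodalSquare S ⧸ xIdeal S) →ₗ[NodalSquare S]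
    (NodalSquare S ⧸ yIdeal S) × (NodalSquare S ⧸ xIdeal S) :=
  prodScale (NodalSquare S ⧸ yIdeal S) (NodalSquare S ⧸ xIdeal S) (x₁ S - x₂ S) (y₁ S - y₂ S)

/-- The map `(a, b) ↦ a + b` from `R/(y₁, y₂) ⊕ R/(x₁, x₂)` to `R/(x₁, y₁, x₂, y₂)`, where `R` is
`NodalSquare S`. -/
abbrev ε : (NodalSquare S ⧸ yIdeal S) × (NodalSquare S ⧸ xIdeal S) →ₗ[NodalSquare S]
    NodalSquare S ⧸ originIdeal S :=
  mayerVietorisSum (yIdeal_le_originIdeal S) (xIdeal_le_originIdeal S)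

end NodalSquare

open NodalSquare in
theorem nodal_conic_resolution_of_diagonal_general (S : Type*) [CommRing S] :
    ε S ∘ₗ d S = 0 ∧
      Function.Injective (d S) ∧
      Function.Surjective (ε S) ∧
      Nonempty ((LinearMap.ker (ε S) ⧸ (LinearMap.range (d S)).comap (LinearMap.ker (ε S)).subtype)
        ≃ₗ[NodalSquare S] NodalSquare S ⧸ diagonalIdeal S) := by
  refine ⟨?_, ?_, mayerVietorisSum_surjective _ _, ⟨?_⟩⟩
  · exact mayerVietorisSum_comp_prodScale _ _
      (fun a => Ideal.mul_mem_right a _ (x₁_sub_x₂_mem_originIdeal S))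
      (fun a => Ideal.mul_mem_right a _ (y₁_sub_y₂_mem_originIdeal S))
  · exact prodScale_injective (isSMulRegular_quotient_yIdeal S)
      (isSMulRegular_quotient_xIdeal S)
  · exact (mayerVietorisHomologyEquiv _ _ (originIdeal_le_sup S) _ _).trans
      (Submodule.quotEquivOfEq _ _ <| by
        rw [range_lsmul_self, range_lsmul_self, yIdeal_sup_inf_xIdeal_sup])

/-- The three-term chain complex `A ⊕ B →(d) A ⊕ B →(ε) K`, placed in homological degrees
`1, 0, −1`, has homology concentrated in degree `0` (i.e. it is a complex, `d` is injective
— vanishing of the degree-1 homology — and `ε` is surjective — vanishing of the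
degree-(−1) homology), and its degree-0 homology `(ker ε) ⧸ (range d)` is isomorphic as an
`R`-module to `R ⧸ (x₁ − x₂, y₁ − y₂)`; that is, the complex is quasi-isomorphic to the
diagonal module `R/(x₁−x₂, y₁−y₂)` placed in degree `0`. -/
theorem nodal_conic_resolution_of_diagonal :
    (nodal_ε k).comp (nodal_d k) = 0 ∧
      Function.Injective (nodal_d k) ∧
      Function.Surjective (nodal_ε k) ∧
      Nonempty ((↥(LinearMap.ker (nodal_ε k)) ⧸
          (LinearMap.range (nodal_d k)).comap (LinearMap.ker (nodal_ε k)).subtype)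
        ≃ₗ[nodalR k]
          (nodalR k ⧸ (Ideal.span {nx₁ k - nx₂ k, ny₁ k - ny₂ k} : Ideal (nodalR k)))) :=
  nodal_conic_resolution_of_diagonal_general k

end
end

section
/- Let J_x = ker(A → K) and J_y = ker(B → K) be the kernels of the canonical quotient maps, and note that (x₁−x₂)·A ⊆ J_x and (y₁−y₂)·B ⊆ J_y. Then there exists a short exact sequence of R-modules 0 → J_x⧸((x₁−x₂)·A) ⊕ J_y⧸((y₁−y₂)·B) → R⧸(x₁−x₂, y₁−y₂) → K → 0 in which the surjection is the canonical quotient map R/(x₁−x₂, y₁−y₂) → R/(x₁,y₁,x₂,y₂); equivalently, there exists an injective R-linear map from J_x/((x₁−x₂)·A) ⊕ J_y/((y₁−y₂)·B) whose image is exactly the kernel of that canonical quotient map. -/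
/-!
Let `k` be a field and `R = k[x₁,y₁,x₂,y₂]/(x₁y₁, x₂y₂)` the coordinate ring of the
self-product of the nodal conic, realized as `MvPolynomial (Fin 4) k` modulo the ideal
generated by `X 0 * X 1` and `X 2 * X 3`, with `x₁ = X 0`, `y₁ = X 1`, `x₂ = X 2`,
`y₂ = X 3`.  We define the `R`-modules `A = R/(y₁,y₂)`, `B = R/(x₁,x₂)`,
`K = R/(x₁,y₁,x₂,y₂)`, the map `d : A ⊕ B → A ⊕ B`, `(a,b) ↦ ((x₁−x₂)a, (y₁−y₂)b)`,
and the map `ε : A ⊕ B → K` given by the canonical quotient maps on each factor.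
-/

open MvPolynomial

set_option synthInstance.maxHeartbeats 1000000
set_option maxHeartbeats 1000000

noncomputable section

variable (k : Type) [Field k]

/-- The submodule `(x₁ − x₂)·A ⊆ A`. -/
def cxA : Submodule (nodalR k) (nodalA k) :=
  LinearMap.range (LinearMap.lsmul (nodalR k) (nodalA k) (nx₁ k - nx₂ k))

/-- The submodule `(y₁ − y₂)·B ⊆ B`. -/
def cyB : Submodule (nodalR k) (nodalB k) :=
  LinearMap.range (LinearMap.lsmul (nodalR k) (nodalB k) (ny₁ k - ny₂ k))

/-- The ideal `(x₁ − x₂, y₁ − y₂)` of `R`, cutting out the diagonal. -/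
def JΔ : Ideal (nodalR k) := Ideal.span {nx₁ k - nx₂ k, ny₁ k - ny₂ k}

lemma JΔ_le_JK : JΔ k ≤ JK k := by
  rw [JΔ, Ideal.span_le]
  rintro a ha
  simp only [Set.mem_insert_iff, Set.mem_singleton_iff] at ha
  rcases ha with rfl | rfl <;>
    exact sub_mem (Ideal.subset_span (by simp [JK])) (Ideal.subset_span (by simp [JK]))

/-- The canonical quotient map `R/(x₁−x₂, y₁−y₂) → R/(x₁,y₁,x₂,y₂) = K`. -/
def πΔ : (nodalR k ⧸ JΔ k) →ₗ[nodalR k] nodalK k :=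
  Submodule.mapQ (JΔ k) (JK k) LinearMap.id (by simpa using JΔ_le_JK k)

/-- `J_x/((x₁−x₂)·A)`, with `J_x = ker(A → K)`. -/
abbrev Qx := ↥(LinearMap.ker (qA k)) ⧸
  (cxA k).comap (LinearMap.ker (qA k)).subtype

/-- `J_y/((y₁−y₂)·B)`, with `J_y = ker(B → K)`. -/
abbrev Qy := ↥(LinearMap.ker (qB k)) ⧸
  (cyB k).comap (LinearMap.ker (qB k)).subtype

/-!
The preimages in `R` of `(x₁ - x₂) A` and `(y₁ - y₂) B` are `P = JΔ + (y₁)` and `Q = JΔ + (x₁)`, so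
the two summands are `JK / P` and `JK / Q`. Since `P + Q = JK`, the Chinese remainder theorem
identifies their sum with `JK / (P ∩ Q)`, and everything comes down to `P ∩ Q = JΔ`. An element of
`Q` is `x₁ r` modulo `JΔ`; if it lies in `P`, then so does `r`, because `x₁` is a nonzerodivisor on
`R / P = k[x₁]`; hence `r` is a multiple of `y₁` modulo `JΔ`, and `x₁ y₁ = 0`.
-/

section QuotientsOfKernels

open Submodule LinearMap

variable {R M : Type*} [Ring R] [AddCommGroup M] [Module R M]

lemma exists_injective_range_eq_of_ker_eq {N P : Type*} [AddCommGroup N] [Module R N]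
    [AddCommGroup P] [Module R P] {f : M →ₗ[R] N} {g : M →ₗ[R] P}
    (hf : Function.Surjective f) (h : ker f = ker g) :
    ∃ ι : N →ₗ[R] P, Function.Injective ι ∧ range ι = range g := by
  let e := (quotEquivOfEq _ _ h).symm.trans (f.quotKerEquivOfSurjective hf)
  refine ⟨(ker g).liftQ g le_rfl ∘ₗ e.symm.toLinearMap, ?_, ?_⟩
  · exact (ker_eq_bot.mp (ker_liftQ_eq_bot' _ _ rfl)).comp e.symm.injective
  · rw [LinearEquiv.range_comp, range_liftQ]

variable {N L : Submodule R M}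

lemma comap_mkQ_ker_factor (h : N ≤ L) : (ker (factor h)).comap N.mkQ = L := by
  rw [← ker_comp, factor_comp_mk, ker_mkQ]

lemma le_ker_factor_iff (h : N ≤ L) {C : Submodule R (M ⧸ N)} :
    C ≤ ker (factor h) ↔ C.comap N.mkQ ≤ L := by
  rw [← comap_le_comap_iff_of_surjective N.mkQ_surjective, comap_mkQ_ker_factor]

/-- The canonical map from `L` to `(L / N) / C`, where `N ≤ L ≤ M`, the module `L / N` is encoded
as the kernel of `M / N → M / L`, and `C` is a submodule of `M / N` (replaced by its intersection
with `L / N` if it is not contained in it). -/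
def toKerFactorQuotient (h : N ≤ L) (C : Submodule R (M ⧸ N)) :
    L →ₗ[R] ker (factor h) ⧸ C.comap (ker (factor h)).subtype :=
  mkQ _ ∘ₗ N.mkQ.restrict fun _ hx ↦ (comap_mkQ_ker_factor h).ge hx

lemma toKerFactorQuotient_surjective (h : N ≤ L) (C : Submodule R (M ⧸ N)) :
    Function.Surjective (toKerFactorQuotient h C) := by
  refine (mkQ_surjective _).comp ?_
  rintro ⟨z, hz⟩
  obtain ⟨m, rfl⟩ := N.mkQ_surjective z
  exact ⟨⟨m, (comap_mkQ_ker_factor h).le hz⟩, rfl⟩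

lemma ker_toKerFactorQuotient (h : N ≤ L) (C : Submodule R (M ⧸ N)) :
    ker (toKerFactorQuotient h C) = (C.comap N.mkQ).submoduleOf L := by
  rw [toKerFactorQuotient, ker_comp, ker_mkQ]
  rfl

lemma exists_injective_range_eq_ker_factor {N₁ N₂ D : Submodule R M}
    (h₁ : N₁ ≤ L) (h₂ : N₂ ≤ L) (hD : D ≤ L)
    {C₁ : Submodule R (M ⧸ N₁)} {C₂ : Submodule R (M ⧸ N₂)}
    (hinf : C₁.comap N₁.mkQ ⊓ C₂.comap N₂.mkQ = D)
    (hsup : C₁.comap N₁.mkQ ⊔ C₂.comap N₂.mkQ = L) :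
    ∃ ι : ((ker (factor h₁) ⧸ C₁.comap (ker (factor h₁)).subtype) ×
        (ker (factor h₂) ⧸ C₂.comap (ker (factor h₂)).subtype)) →ₗ[R] M ⧸ D,
      Function.Injective ι ∧ range ι = ker (factor hD) := by
  let f₁ := toKerFactorQuotient h₁ C₁
  let f₂ := toKerFactorQuotient h₂ C₂
  have hker_sup : ker f₁ ⊔ ker f₂ = ⊤ := by
    rw [ker_toKerFactorQuotient, ker_toKerFactorQuotient,
      ← submoduleOf_sup_of_le (le_sup_left.trans hsup.le) (le_sup_right.trans hsup.le), hsup,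
      submoduleOf_self]
  have hsurj : Function.Surjective (f₁.prod f₂) := by
    rw [← range_eq_top, range_prod_eq hker_sup,
      range_eq_top.mpr (toKerFactorQuotient_surjective h₁ C₁),
      range_eq_top.mpr (toKerFactorQuotient_surjective h₂ C₂), prod_top]
  have hker : ker (f₁.prod f₂) = ker (D.mkQ ∘ₗ L.subtype) := by
    rw [ker_prod, ker_toKerFactorQuotient, ker_toKerFactorQuotient, ker_comp, ker_mkQ, ← hinf]
    rfl
  obtain ⟨ι, hι, hrange⟩ := exists_injective_range_eq_of_ker_eq hsurj hker
  refine ⟨ι, hι, hrange.trans ?_⟩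
  rw [range_comp, range_subtype, ← map_comap_eq_of_surjective D.mkQ_surjective (ker (factor hD)),
    comap_mkQ_ker_factor]

end QuotientsOfKernels

section Ideals

open Ideal

lemma ker_eq_of_comp_eq_mkₐ {S A B : Type*} [CommSemiring S] [CommRing A] [Semiring B]
    [Algebra S A] [Algebra S B] {I : Ideal A} {f : A →ₐ[S] B} (g : B →ₐ[S] A)
    (hI : I ≤ RingHom.ker f)
    (h : (Quotient.mkₐ S I).comp (g.comp f) = Quotient.mkₐ S I) :
    RingHom.ker f = I := by
  refine le_antisymm (fun r hr ↦ ?_) hI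
  rw [← Quotient.eq_zero_iff_mem, ← Quotient.mkₐ_eq_mk S, ← h]
  simp [RingHom.mem_ker.mp hr]

variable {R : Type*} [CommRing R]

lemma comap_mkQ_range_lsmul_s7 (I : Ideal R) (a : R) :
    (LinearMap.range (LinearMap.lsmul R (R ⧸ I) a)).comap I.mkQ = span {a} ⊔ I := by
  ext r
  simp only [Submodule.mem_comap, LinearMap.mem_range, I.mkQ_surjective.exists,
    LinearMap.lsmul_apply, ← map_smul, mem_span_singleton_sup]
  constructor
  · rintro ⟨s, hs⟩
    exact ⟨s, r - a * s, (Submodule.Quotient.eq I).mp hs.symm, by ring⟩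
  · rintro ⟨s, i, hi, rfl⟩
    refine ⟨s, ((Submodule.Quotient.eq I).mpr ?_).symm⟩
    simpa [mul_comm] using hi

lemma span_singleton_sup_inf_span_singleton_sup {I : Ideal R} {x y : R} (hxy : x * y ∈ I)
    (hx : IsSMulRegular (R ⧸ (span {y} ⊔ I)) x) :
    (span {y} ⊔ I) ⊓ (span {x} ⊔ I) = I := by
  refine le_antisymm ?_ (le_inf le_sup_right le_sup_right)
  rintro z ⟨hP, hQ⟩
  obtain ⟨r, i, hi, rfl⟩ := mem_span_singleton_sup.mp hQ
  have hxr : x • r ∈ span {y} ⊔ I := by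
    simpa [mul_comm] using (add_mem_cancel_right (mem_sup_right hi)).mp hP
  obtain ⟨s, j, hj, rfl⟩ :=
    mem_span_singleton_sup.mp (mem_of_isSMulRegular_quotient_of_smul_mem hx hxr)
  have hsplit : (s * y + j) * x + i = s * (x * y) + x * j + i := by ring
  rw [hsplit]
  exact add_mem (add_mem (I.mul_mem_left s hxy) (I.mul_mem_left x hj)) hi

lemma span_singleton_sup_span_pair_eq (a b c : R) :
    span {a} ⊔ span {b, c} = span {b} ⊔ span {a, b - c} := by
  rw [← span_pair_sub_right', span_insert, span_insert, sup_left_comm]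

lemma span_pair_sub_le (x₁ y₁ x₂ y₂ : R) :
    span {x₁ - x₂, y₁ - y₂} ≤ span {x₁, y₁, x₂, y₂} := by
  rw [span_le, Set.pair_subset_iff]
  exact ⟨sub_mem (subset_span (by simp)) (subset_span (by simp)),
    sub_mem (subset_span (by simp)) (subset_span (by simp))⟩

lemma span_singleton_sup_sup_eq_span (x₁ y₁ x₂ y₂ : R) :
    (span {y₁} ⊔ span {x₁ - x₂, y₁ - y₂}) ⊔ (span {x₁} ⊔ span {x₁ - x₂, y₁ - y₂}) =
      span {x₁, y₁, x₂, y₂} := by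
  calc
    _ = span {x₁, x₁ - x₂} ⊔ span {y₁, y₁ - y₂} := by simp only [span_insert]; ac_rfl
    _ = span {x₁, x₂} ⊔ span {y₁, y₂} := by rw [span_pair_sub_right', span_pair_sub_right']
    _ = span {x₁, y₁, x₂, y₂} := by simp only [span_insert]; ac_rfl

theorem nodal_conic_short_exact_sequence_general {x₁ y₁ x₂ y₂ : R} (hxy : x₁ * y₁ = 0)
    (hx : IsSMulRegular (R ⧸ span {y₁, x₁ - x₂, y₁ - y₂}) x₁) :
    let hA : span {y₁, y₂} ≤ span {x₁, y₁, x₂, y₂} := span_mono (by grind)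
    let hB : span {x₁, x₂} ≤ span {x₁, y₁, x₂, y₂} := span_mono (by grind)
    let cx := LinearMap.range (LinearMap.lsmul R (R ⧸ span {y₁, y₂}) (x₁ - x₂))
    let cy := LinearMap.range (LinearMap.lsmul R (R ⧸ span {x₁, x₂}) (y₁ - y₂))
    let Jx := LinearMap.ker (Submodule.factor hA)
    let Jy := LinearMap.ker (Submodule.factor hB)
    cx ≤ Jx ∧ cy ≤ Jy ∧
    ∃ ι : ((Jx ⧸ cx.comap Jx.subtype) × (Jy ⧸ cy.comap Jy.subtype)) →ₗ[R]
        R ⧸ span {x₁ - x₂, y₁ - y₂},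
      Function.Injective ι ∧
        LinearMap.range ι = LinearMap.ker (Submodule.factor (span_pair_sub_le x₁ y₁ x₂ y₂)) := by
  intro hA hB cx cy Jx Jy
  have hcx : cx.comap (Submodule.mkQ _) = span {y₁} ⊔ span {x₁ - x₂, y₁ - y₂} := by
    rw [comap_mkQ_range_lsmul_s7, span_singleton_sup_span_pair_eq]
  have hcy : cy.comap (Submodule.mkQ _) = span {x₁} ⊔ span {x₁ - x₂, y₁ - y₂} := by
    rw [comap_mkQ_range_lsmul_s7, span_singleton_sup_span_pair_eq, span_pair_comm]
  have hinf : cx.comap (Submodule.mkQ _) ⊓ cy.comap (Submodule.mkQ _) =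
      span {x₁ - x₂, y₁ - y₂} := by
    rw [hcx, hcy]
    refine span_singleton_sup_inf_span_singleton_sup (hxy ▸ zero_mem _) ?_
    rwa [← span_insert]
  have hsup : cx.comap (Submodule.mkQ _) ⊔ cy.comap (Submodule.mkQ _) =
      span {x₁, y₁, x₂, y₂} := by
    rw [hcx, hcy, span_singleton_sup_sup_eq_span]
  exact ⟨(le_ker_factor_iff hA).mpr (le_sup_left.trans hsup.le),
    (le_ker_factor_iff hB).mpr (le_sup_right.trans hsup.le),
    exists_injective_range_eq_ker_factor hA hB _ hinf hsup⟩

end Ideals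

section NodalConic

lemma nx₁_mul_ny₁ : nx₁ k * ny₁ k = 0 :=
  Ideal.Quotient.eq_zero_iff_mem.mpr (Ideal.subset_span (by simp))

variable {k} in
lemma nodalR_algHom_ext {B : Type*} [Semiring B] [Algebra k B] {f g : nodalR k →ₐ[k] B}
    (hx₁ : f (nx₁ k) = g (nx₁ k)) (hy₁ : f (ny₁ k) = g (ny₁ k))
    (hx₂ : f (nx₂ k) = g (nx₂ k)) (hy₂ : f (ny₂ k) = g (ny₂ k)) : f = g := by
  refine Ideal.Quotient.algHom_ext k (MvPolynomial.algHom_ext fun i ↦ ?_)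
  fin_cases i
  exacts [hx₁, hy₁, hx₂, hy₂]

/-- The surjection `R → k[x]` with `x₁, x₂ ↦ x` and `y₁, y₂ ↦ 0`, i.e. restriction of functions to
the component `y = 0` of the diagonal. -/
def diagonalXAxisEval : nodalR k →ₐ[k] Polynomial k :=
  Ideal.Quotient.liftₐ _ (aeval ![Polynomial.X, 0, Polynomial.X, 0]) fun p hp ↦ by
    refine (Ideal.span_le (I := RingHom.ker _)).mpr ?_ hp
    rintro _ (rfl | rfl) <;> simp [RingHom.mem_ker]

lemma diagonalXAxisEval_nx₁ : diagonalXAxisEval k (nx₁ k) = Polynomial.X := aeval_X _ 0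

lemma diagonalXAxisEval_ny₁ : diagonalXAxisEval k (ny₁ k) = 0 := aeval_X _ 1

lemma diagonalXAxisEval_nx₂ : diagonalXAxisEval k (nx₂ k) = Polynomial.X := aeval_X _ 2

lemma diagonalXAxisEval_ny₂ : diagonalXAxisEval k (ny₂ k) = 0 := aeval_X _ 3

lemma span_le_ker_diagonalXAxisEval :
    Ideal.span {ny₁ k, nx₁ k - nx₂ k, ny₁ k - ny₂ k} ≤ RingHom.ker (diagonalXAxisEval k) := by
  rw [Ideal.span_le]
  rintro _ (rfl | rfl | rfl) <;>
    simp [diagonalXAxisEval_nx₁, diagonalXAxisEval_ny₁, diagonalXAxisEval_nx₂,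
      diagonalXAxisEval_ny₂]

lemma ker_diagonalXAxisEval :
    RingHom.ker (diagonalXAxisEval k) = Ideal.span {ny₁ k, nx₁ k - nx₂ k, ny₁ k - ny₂ k} := by
  set P := Ideal.span {ny₁ k, nx₁ k - nx₂ k, ny₁ k - ny₂ k}
  have hy₁ : Ideal.Quotient.mk P (ny₁ k) = 0 :=
    Ideal.Quotient.eq_zero_iff_mem.mpr (Ideal.subset_span (by simp))
  have hx : Ideal.Quotient.mk P (nx₁ k) = Ideal.Quotient.mk P (nx₂ k) :=
    Ideal.Quotient.eq.mpr (Ideal.subset_span (by simp))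
  have hy : Ideal.Quotient.mk P (ny₁ k) = Ideal.Quotient.mk P (ny₂ k) :=
    Ideal.Quotient.eq.mpr (Ideal.subset_span (by simp))
  refine ker_eq_of_comp_eq_mkₐ (Polynomial.aeval (nx₁ k)) (span_le_ker_diagonalXAxisEval k) ?_
  refine nodalR_algHom_ext ?_ ?_ ?_ ?_
  · simp [diagonalXAxisEval_nx₁]
  · simp [diagonalXAxisEval_ny₁, hy₁]
  · simp [diagonalXAxisEval_nx₂, hx]
  · simp [diagonalXAxisEval_ny₂, ← hy, hy₁]

lemma isSMulRegular_nx₁ :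
    IsSMulRegular (nodalR k ⧸ Ideal.span {ny₁ k, nx₁ k - nx₂ k, ny₁ k - ny₂ k}) (nx₁ k) := by
  rw [← ker_diagonalXAxisEval, isSMulRegular_quotient_iff_mem_of_smul_mem]
  intro r hr
  have hmul : Polynomial.X * diagonalXAxisEval k r = 0 := by
    rwa [smul_eq_mul, RingHom.mem_ker, map_mul, diagonalXAxisEval_nx₁] at hr
  exact (mul_eq_zero.mp hmul).resolve_left Polynomial.X_ne_zero

end NodalConic

/-- There is a short exact sequence
`0 → J_x/((x₁−x₂)A) ⊕ J_y/((y₁−y₂)B) → R/(x₁−x₂, y₁−y₂) → K → 0`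
in which the surjection is the canonical quotient map; i.e. `(x₁−x₂)·A ⊆ J_x`,
`(y₁−y₂)·B ⊆ J_y`, and there is an injective `R`-linear map from
`J_x/((x₁−x₂)A) ⊕ J_y/((y₁−y₂)B)` whose image is exactly the kernel of the canonical
quotient map `R/(x₁−x₂, y₁−y₂) → K`. -/
theorem nodal_conic_short_exact_sequence :
    cxA k ≤ LinearMap.ker (qA k) ∧
    cyB k ≤ LinearMap.ker (qB k) ∧
    ∃ ι : (Qx k × Qy k) →ₗ[nodalR k] (nodalR k ⧸ JΔ k),
      Function.Injective ι ∧ LinearMap.range ι = LinearMap.ker (πΔ k) :=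
  nodal_conic_short_exact_sequence_general (nx₁_mul_ny₁ k) (isSMulRegular_nx₁ k)

end
end
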